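/- For i ∈ {1,…,d} define the averaged two-point function Ĝ(w) = (1/2)( ⟨φ_o^1 φ_w^1⟩_{L,N,β} + ⟨φ_o^1 φ_{w_i e_i}^1⟩_{L,N,β} ) for w ∈ T_L. Let z ∈ T_L with z ≠ o and let q be a natural number such that z_i + q is even and both z_i − q and z_i + q lie in the open interval (0, L). Then Ĝ(z) − Ĝ(z − q e_i) ≤ Ĝ(z + q e_i) − Ĝ(z). -/

import Mathlib

open MeasureTheory Metric
open scoped RealInnerProductSpace BigOperators

/-- Vertices of the torus `(ℤ/Lℤ)^d`. -/
abbrev TorusPt (d L : ℕ) := Fin d → ZMod L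

/-- Nearest-neighbour adjacency on the torus: `x` and `y` differ by `±1 (mod L)`
in exactly one coordinate. -/
def torusAdj {d L : ℕ} (x y : TorusPt d L) : Prop :=
  ∃ j : Fin d, y = Function.update x j (x j + 1) ∨ y = Function.update x j (x j - 1)

instance {d L : ℕ} (x y : TorusPt d L) : Decidable (torusAdj x y) := by
  unfold torusAdj; infer_instance

/-- The unit sphere `S^{N-1} ⊂ ℝ^N`. -/
abbrev SpinSphere (N : ℕ) := sphere (0 : EuclideanSpace ℝ (Fin N)) 1

/-- A spin configuration on the torus. -/
abbrev SpinCfg (d L N : ℕ) := TorusPt d L → SpinSphere N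

/-- The uniform probability measure on the unit sphere `S^{N-1}`. -/
noncomputable def sphereUniform (N : ℕ) : Measure (SpinSphere N) :=
  ((volume : Measure (EuclideanSpace ℝ (Fin N))).toSphere Set.univ)⁻¹ •
    (volume : Measure (EuclideanSpace ℝ (Fin N))).toSphere

/-- The product over vertices of the uniform probability measures on the sphere. -/
noncomputable def spinMeasure (d L N : ℕ) [NeZero L] : Measure (SpinCfg d L N) :=
  Measure.pi fun _ : TorusPt d L => sphereUniform N

/-- The Hamiltonian `H(φ) = -∑_{{x,y} edge} φ_x · φ_y`; every unordered
nearest-neighbour edge appears exactly twice in the double sum below. -/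
noncomputable def hamiltonian {d L N : ℕ} [NeZero L] (φ : SpinCfg d L N) : ℝ :=
  -(1 / 2) * ∑ x : TorusPt d L, ∑ y : TorusPt d L,
    if torusAdj x y then
      ⟪(φ x : EuclideanSpace ℝ (Fin N)), (φ y : EuclideanSpace ℝ (Fin N))⟫
    else 0

/-- The Gibbs expectation `⟨f⟩_{L,N,β}`. -/
noncomputable def gibbsExp (d L N : ℕ) [NeZero L] (β : ℝ) (f : SpinCfg d L N → ℝ) : ℝ :=
  (∫ φ, Real.exp (-β * hamiltonian φ) ∂(spinMeasure d L N))⁻¹ *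
    ∫ φ, f φ * Real.exp (-β * hamiltonian φ) ∂(spinMeasure d L N)

/-- The spin-spin correlation `⟨φ_x ⬝ φ_y⟩_{L,N,β}`. -/
noncomputable def corrDot (d L N : ℕ) [NeZero L] (β : ℝ) (x y : TorusPt d L) : ℝ :=
  gibbsExp d L N β fun φ =>
    ⟪(φ x : EuclideanSpace ℝ (Fin N)), (φ y : EuclideanSpace ℝ (Fin N))⟫

/-- The correlation `⟨φ_x^1 φ_y^1⟩_{L,N,β}` of first components. -/
noncomputable def corrOne (d L N : ℕ) [NeZero L] [NeZero N] (β : ℝ) (x y : TorusPt d L) : ℝ :=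
  gibbsExp d L N β fun φ =>
    (φ x : EuclideanSpace ℝ (Fin N)) 0 * (φ y : EuclideanSpace ℝ (Fin N)) 0

/-- The origin of the torus. -/
def torusOrigin (d L : ℕ) : TorusPt d L := fun _ => 0

/-- The point `n • e_i` on the `i`-th cartesian axis. -/
def axisPt (d L : ℕ) (i : Fin d) (n : ℕ) : TorusPt d L :=
  fun k => if k = i then (n : ZMod L) else 0

/-- The sup torus norm `‖z‖_∞ = max_i min(z_i, L - z_i)`. -/
def tnormInf {d L : ℕ} (z : TorusPt d L) : ℕ :=
  Finset.univ.sup fun i : Fin d => min (z i).val (L - (z i).val)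

/-- The averaged two-point function
`Ĝ(w) = (⟨φ_o^1 φ_w^1⟩ + ⟨φ_o^1 φ_{w_i e_i}^1⟩)/2`. -/
noncomputable def avgTwoPoint (d L N : ℕ) [NeZero L] [NeZero N] (β : ℝ) (i : Fin d)
    (w : TorusPt d L) : ℝ :=
  (corrOne d L N β (torusOrigin d L) w +
    corrOne d L N β (torusOrigin d L) (fun k => if k = i then w i else 0)) / 2

instance sphereUniform_prob (N : ℕ) [NeZero N] : IsProbabilityMeasure (sphereUniform N) := by
  constructor
  have hne : (volume : Measure (EuclideanSpace ℝ (Fin N))).toSphere Set.univ ≠ 0 := by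
    rw [Measure.toSphere_apply_univ]
    refine mul_ne_zero ?_ (measure_ball_pos _ _ one_pos).ne'
    simp [NeZero.ne N]
  simp only [sphereUniform, Measure.smul_apply, smul_eq_mul]
  exact ENNReal.inv_mul_cancel hne (measure_ne_top _ _)

instance spinMeasure_prob (d L N : ℕ) [NeZero L] [NeZero N] :
    IsProbabilityMeasure (spinMeasure d L N) := by
  unfold spinMeasure; infer_instance

/-- Gluing of three configurations. -/
def glueCfg {V S : Type*} (A B : V → Prop) [DecidablePred A] [DecidablePred B] (θ : V → V)
    (p : (V → S) × (V → S) × (V → S)) : V → S :=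
  fun x => if A x then p.2.1 x else if B x then p.2.2 (θ x) else p.1 x

lemma glueCfg_measurePreserving {V S : Type*} [Fintype V] [MeasurableSpace S]
    (μ : Measure S) [IsProbabilityMeasure μ]
    (A B : V → Prop) [DecidablePred A] [DecidablePred B] (θ : Equiv.Perm V)
    (hAB : ∀ x, A x → ¬ B x) (hθ : ∀ x, θ (θ x) = x) :
    MeasurePreserving (glueCfg A B θ)
      ((Measure.pi fun _ : V => μ).prod
        ((Measure.pi fun _ : V => μ).prod (Measure.pi fun _ : V => μ)))
      (Measure.pi fun _ : V => μ) := by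
  have hm : Measurable (glueCfg (S := S) A B θ) := by
    rw [measurable_pi_iff]
    intro x
    unfold glueCfg
    split_ifs <;> fun_prop
  refine ⟨hm, ?_⟩
  symm
  apply Measure.pi_eq
  intro (s : V → Set S) hs
  rw [Measure.map_apply hm (MeasurableSet.univ_pi hs)]
  have hpre : glueCfg (S := S) A B θ ⁻¹' (Set.univ.pi s) =
      (Set.univ.pi fun x => if A x ∨ B x then Set.univ else s x) ×ˢ
        ((Set.univ.pi fun x => if A x then s x else Set.univ) ×ˢ
          (Set.univ.pi fun x => if B (θ x) then s (θ x) else Set.univ)) := by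
    ext ⟨ω, φ, ψ⟩
    simp only [Set.mem_preimage, Set.mem_pi, Set.mem_univ, true_imp_iff, Set.mem_prod, glueCfg]
    constructor
    · intro h
      refine ⟨fun x => ?_, fun x => ?_, fun x => ?_⟩
      · have := h x
        split_ifs with h1
        · trivial
        · push Not at h1
          simpa [h1.1, h1.2] using this
      · have := h x
        split_ifs with h1
        · simpa [h1] using this
        · trivial
      · have := h (θ x)
        split_ifs with h1
        · have h2 : ¬ A (θ x) := fun h3 => hAB _ h3 h1
          simpa [h1, h2, hθ] using this
        · trivial
    · rintro ⟨h1, h2, h3⟩ x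
      split_ifs with hA hB
      · simpa [hA] using h2 x
      · simpa [hB, hθ] using h3 (θ x)
      · simpa [hA, hB] using h1 x
  rw [hpre, Measure.prod_prod, Measure.prod_prod, Measure.pi_pi, Measure.pi_pi, Measure.pi_pi]
  rw [Equiv.prod_comp θ (fun x => μ (if B x then s x else Set.univ)), ← Finset.prod_mul_distrib,
    ← Finset.prod_mul_distrib]
  refine Finset.prod_congr rfl fun x _ => ?_
  by_cases hA : A x
  · simp [hA, hAB x hA]
  · by_cases hB : B x <;> simp [hA, hB]

/-- Abstract reflection positivity. -/
lemma refl_pos {V S : Type*} [Fintype V] [MeasurableSpace S] [TopologicalSpace S]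
    [CompactSpace S] [SecondCountableTopology S] [BorelSpace S]
    (μ : Measure S) [IsProbabilityMeasure μ]
    (A B : V → Prop) [DecidablePred A] [DecidablePred B] (θ : Equiv.Perm V)
    (hAB : ∀ x, A x → ¬ B x) (hθ : ∀ x, θ (θ x) = x) (hA : ∀ x, A x → B (θ x))
    (hC : ∀ x, ¬ A x → ¬ B x → θ x = x)
    (h : (V → S) → ℝ) (hc : Continuous h)
    (hloc : ∀ φ ψ : V → S, (∀ x, ¬ B x → φ x = ψ x) → h φ = h ψ) :
    0 ≤ ∫ φ, h φ * h (fun x => φ (θ x)) ∂(Measure.pi fun _ : V => μ) := by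
  have hmp := glueCfg_measurePreserving μ A B θ hAB hθ
  have hcont : Continuous fun φ : V → S => h φ * h (fun x => φ (θ x)) := by fun_prop
  have hgc : Continuous (glueCfg (S := S) A B θ) := by
    apply continuous_pi
    intro x
    unfold glueCfg
    split_ifs <;> fun_prop
  rw [← hmp.map_eq, integral_map hmp.measurable.aemeasurable
    hcont.measurable.aestronglyMeasurable]
  let k : (V → S) → (V → S) → ℝ := fun ω φ => h (fun x => if A x then φ x else ω x)
  have key : ∀ p : (V → S) × (V → S) × (V → S),
      h (glueCfg A B θ p) * h (fun x => glueCfg A B θ p (θ x)) = k p.1 p.2.1 * k p.1 p.2.2 := by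
    rintro ⟨ω, φ, ψ⟩
    congr 1
    · apply hloc
      intro x hx
      simp [glueCfg, hx]
    · apply hloc
      intro x hx
      by_cases hAx : A x
      · have h1 := hA x hAx
        have h2 : ¬ A (θ x) := fun h3 => hAB _ h3 h1
        simp [glueCfg, h1, h2, hθ, hAx]
      · simp [glueCfg, hC x hAx hx, hAx, hx]
  have hint : Integrable (fun p : (V → S) × (V → S) × (V → S) => k p.1 p.2.1 * k p.1 p.2.2)
      ((Measure.pi fun _ : V => μ).prod
        ((Measure.pi fun _ : V => μ).prod (Measure.pi fun _ : V => μ))) := by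
    have : Continuous (fun p : (V → S) × (V → S) × (V → S) => k p.1 p.2.1 * k p.1 p.2.2) := by
      simp only [← key]
      fun_prop
    exact this.integrable_of_hasCompactSupport (HasCompactSupport.of_compactSpace _)
  simp only [key]
  rw [integral_prod _ hint]
  refine integral_nonneg fun ω => ?_
  simp only
  rw [integral_prod_mul (fun φ => k ω φ) (fun φ => k ω φ)]
  exact mul_self_nonneg _

section model

set_option linter.unusedSectionVars false

variable {d L N : ℕ} [NeZero L] [NeZero N]

lemma torusAdj_symm {x y : TorusPt d L} (h : torusAdj x y) : torusAdj y x := by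
  obtain ⟨j, h | h⟩ := h
  · exact ⟨j, Or.inr (by subst h; simp)⟩
  · exact ⟨j, Or.inl (by subst h; simp)⟩

lemma continuous_inner_cfg (x y : TorusPt d L) : Continuous fun φ : SpinCfg d L N =>
    ⟪(φ x : EuclideanSpace ℝ (Fin N)), (φ y : EuclideanSpace ℝ (Fin N))⟫ := by
  apply Continuous.inner <;> fun_prop

lemma continuous_comp_cfg (x : TorusPt d L) : Continuous fun φ : SpinCfg d L N =>
    (φ x : EuclideanSpace ℝ (Fin N)) 0 := by
  fun_prop

lemma continuous_hamiltonian : Continuous (hamiltonian : SpinCfg d L N → ℝ) := by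
  unfold hamiltonian
  refine continuous_const.mul (continuous_finsetSum _ fun x _ => continuous_finsetSum _ fun y _ => ?_)
  split_ifs
  · exact continuous_inner_cfg x y
  · exact continuous_const

lemma integrable_cfg {f : SpinCfg d L N → ℝ} (hf : Continuous f) :
    Integrable f (spinMeasure d L N) :=
  hf.integrable_of_hasCompactSupport (HasCompactSupport.of_compactSpace _)

lemma reindex_mp (σ : Equiv.Perm (TorusPt d L)) :
    MeasurePreserving (fun (φ : SpinCfg d L N) x => φ (σ x)) (spinMeasure d L N)
      (spinMeasure d L N) := by
  have hm : Measurable (fun (φ : SpinCfg d L N) x => φ (σ x)) := by fun_prop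
  refine ⟨hm, ?_⟩
  symm
  apply Measure.pi_eq
  intro (s : TorusPt d L → Set (SpinSphere N)) hs
  rw [Measure.map_apply hm (MeasurableSet.univ_pi hs)]
  have : (fun (φ : SpinCfg d L N) x => φ (σ x)) ⁻¹' (Set.univ.pi s) =
      Set.univ.pi fun x => s (σ.symm x) := by
    ext φ
    simp only [Set.mem_preimage, Set.mem_pi, Set.mem_univ, true_imp_iff]
    constructor
    · intro h x
      simpa using h (σ.symm x)
    · intro h x
      simpa using h (σ x)
  rw [this, spinMeasure, Measure.pi_pi]
  exact Equiv.prod_comp σ.symm (fun x => sphereUniform N (s x))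

lemma hamiltonian_reindex (σ : Equiv.Perm (TorusPt d L))
    (hσ : ∀ x y, torusAdj (σ x) (σ y) ↔ torusAdj x y) (φ : SpinCfg d L N) :
    hamiltonian (fun x => φ (σ x)) = hamiltonian φ := by
  unfold hamiltonian
  congr 1
  conv_rhs => rw [← Equiv.sum_comp σ]
  refine Finset.sum_congr rfl fun x _ => ?_
  conv_rhs => rw [← Equiv.sum_comp σ]
  simp only [hσ]

lemma corrOne_auto (β : ℝ) (σ : Equiv.Perm (TorusPt d L))
    (hσ : ∀ x y, torusAdj (σ x) (σ y) ↔ torusAdj x y) (x y : TorusPt d L) :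
    corrOne d L N β (σ x) (σ y) = corrOne d L N β x y := by
  unfold corrOne gibbsExp
  congr 1
  have hmp := reindex_mp (N := N) σ
  have hc : Continuous (fun φ : SpinCfg d L N => (φ x : EuclideanSpace ℝ (Fin N)) 0 *
      (φ y : EuclideanSpace ℝ (Fin N)) 0 * Real.exp (-β * hamiltonian φ)) := by
    have := continuous_hamiltonian (d := d) (L := L) (N := N)
    have := continuous_comp_cfg (N := N) x
    have := continuous_comp_cfg (N := N) y
    fun_prop
  conv_rhs => rw [← hmp.map_eq, integral_map hmp.measurable.aemeasurable
    hc.measurable.aestronglyMeasurable]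
  simp only [hamiltonian_reindex σ hσ]

/-- The affine automorphism `w ↦ s (w - u)`. -/
def affPerm (s u : TorusPt d L) (hs : ∀ k, s k * s k = 1) : Equiv.Perm (TorusPt d L) where
  toFun w := fun k => s k * (w k - u k)
  invFun w := fun k => s k * w k + u k
  left_inv w := by
    funext k
    simp only [← mul_assoc, hs]; ring
  right_inv w := by
    funext k
    simp only [add_sub_cancel_right, ← mul_assoc, hs]; ring

lemma affPerm_adj_of (s u : TorusPt d L) (hs : ∀ k, s k * s k = 1)
    (hs1 : ∀ k, s k = 1 ∨ s k = -1) (x y : TorusPt d L) (h : torusAdj x y) :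
    torusAdj (affPerm s u hs x) (affPerm s u hs y) := by
  obtain ⟨j, h⟩ := h
  refine ⟨j, ?_⟩
  rcases hs1 j with hj | hj <;> rcases h with rfl | rfl
  · left
    funext k
    by_cases hk : k = j
    · subst hk; simp [affPerm, hj]; ring
    · simp [affPerm, hk]
  · right
    funext k
    by_cases hk : k = j
    · subst hk; simp [affPerm, hj]; ring
    · simp [affPerm, hk]
  · right
    funext k
    by_cases hk : k = j
    · subst hk; simp [affPerm, hj]; ring
    · simp [affPerm, hk]
  · left
    funext k
    by_cases hk : k = j
    · subst hk; simp [affPerm, hj]; ring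
    · simp [affPerm, hk]

lemma affPerm_adj (s u : TorusPt d L) (hs : ∀ k, s k * s k = 1)
    (hs1 : ∀ k, s k = 1 ∨ s k = -1) (x y : TorusPt d L) :
    torusAdj (affPerm s u hs x) (affPerm s u hs y) ↔ torusAdj x y := by
  refine ⟨fun h => ?_, affPerm_adj_of s u hs hs1 x y⟩
  have h2 := affPerm_adj_of s (fun k => - s k * u k) hs hs1 _ _ h
  have : ∀ w, affPerm s (fun k => - s k * u k) hs (affPerm s u hs w) = w := by
    intro w
    funext k
    have : s k * (s k * (w k - u k) - - s k * u k) = (s k * s k) * w k := by ring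
    simp only [affPerm, Equiv.coe_fn_mk, this, hs, one_mul]
  rwa [this, this] at h2

/-- The reflection of the `i`-th coordinate. -/
def reflPt (i : Fin d) (x : TorusPt d L) : TorusPt d L := Function.update x i (- x i)

def reflSign (i : Fin d) : TorusPt d L := fun k => if k = i then -1 else 1

lemma reflSign_sq (i : Fin d) (k : Fin d) :
    (reflSign i : TorusPt d L) k * (reflSign i : TorusPt d L) k = 1 := by
  unfold reflSign; split_ifs <;> simp

lemma reflSign_or (i : Fin d) (k : Fin d) :
    (reflSign i : TorusPt d L) k = 1 ∨ (reflSign i : TorusPt d L) k = -1 := by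
  unfold reflSign; split_ifs <;> simp

def reflPerm (i : Fin d) : Equiv.Perm (TorusPt d L) := affPerm (reflSign i) 0 (reflSign_sq i)

lemma reflPerm_apply (i : Fin d) (x : TorusPt d L) (k : Fin d) :
    reflPerm i x k = if k = i then - x k else x k := by
  simp only [reflPerm, affPerm, reflSign, Equiv.coe_fn_mk]
  split_ifs <;> simp

def sideA (i : Fin d) (x : TorusPt d L) : Prop := 0 < (x i).val ∧ 2 * (x i).val < L
def sideB (i : Fin d) (x : TorusPt d L) : Prop := L < 2 * (x i).val

instance (i : Fin d) : DecidablePred (sideA (L := L) i) := fun x => by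
  unfold sideA; infer_instance
instance (i : Fin d) : DecidablePred (sideB (L := L) i) := fun x => by
  unfold sideB; infer_instance

lemma refl_val (i : Fin d) (x : TorusPt d L) :
    (reflPerm i x i).val = if (x i).val = 0 then 0 else L - (x i).val := by
  rw [reflPerm_apply, if_pos rfl, ZMod.neg_val]
  simp only [ZMod.val_eq_zero]

lemma sideA_refl (i : Fin d) (x : TorusPt d L) : sideA i (reflPerm i x) ↔ sideB i x := by
  unfold sideA sideB
  rw [refl_val]
  have := ZMod.val_lt (x i)
  split_ifs <;> omega

lemma sideB_refl (i : Fin d) (x : TorusPt d L) : sideB i (reflPerm i x) ↔ sideA i x := by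
  unfold sideA sideB
  rw [refl_val]
  have := ZMod.val_lt (x i)
  split_ifs <;> omega

lemma reflPerm_invol (i : Fin d) (x : TorusPt d L) : reflPerm i (reflPerm i x) = x := by
  funext k
  rw [reflPerm_apply, reflPerm_apply]
  split_ifs <;> simp

lemma reflPerm_fix (i : Fin d) (x : TorusPt d L) (hA : ¬ sideA i x) (hB : ¬ sideB i x) :
    reflPerm i x = x := by
  funext k
  by_cases hk : k = i
  · subst hk
    apply ZMod.val_injective
    rw [refl_val]
    unfold sideA at hA
    unfold sideB at hB
    split_ifs <;> omega
  · simp [reflPerm_apply, hk]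

lemma not_adj_AB (hL : Even L) (i : Fin d) (x y : TorusPt d L) (hA : sideA i x) (hB : sideB i y) :
    ¬ torusAdj x y := by
  rintro ⟨j, h⟩
  obtain ⟨m, hm⟩ := hL
  unfold sideA at hA
  unfold sideB at hB
  by_cases hj : j = i
  · subst hj
    have hx : ((x j).val : ZMod L) = x j := ZMod.natCast_zmod_val _
    rcases h with rfl | rfl
    · have : x j + 1 = (((x j).val + 1 : ℕ) : ZMod L) := by push_cast; rw [hx]
      rw [Function.update_self, this, ZMod.val_natCast, Nat.mod_eq_of_lt (by omega)] at hB
      omega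
    · have : x j - 1 = (((x j).val - 1 : ℕ) : ZMod L) := by
        rw [Nat.cast_sub (by omega)]; push_cast; rw [hx]
      rw [Function.update_self, this, ZMod.val_natCast, Nat.mod_eq_of_lt (by omega)] at hB
      omega
  · have : y i = x i := by
      rcases h with rfl | rfl <;> simp [Ne.symm hj]
    rw [this] at hB
    omega

/-- weights -/
noncomputable def halfW (i : Fin d) (x y : TorusPt d L) : ℝ :=
  if sideB i x ∨ sideB i y then 0 else if sideA i x ∨ sideA i y then 1 else 1 / 2

noncomputable def halfE (i : Fin d) (φ : SpinCfg d L N) : ℝ :=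
  (1 / 2) * ∑ x : TorusPt d L, ∑ y : TorusPt d L, halfW i x y *
    if torusAdj x y then
      ⟪(φ x : EuclideanSpace ℝ (Fin N)), (φ y : EuclideanSpace ℝ (Fin N))⟫
    else 0

lemma halfE_add (hL : Even L) (i : Fin d) (φ : SpinCfg d L N) :
    halfE i φ + halfE i (fun x => φ (reflPerm i x)) = - hamiltonian φ := by
  have h2 : halfE i (fun x => φ (reflPerm i x)) =
      (1 / 2) * ∑ x : TorusPt d L, ∑ y : TorusPt d L, halfW i (reflPerm i x) (reflPerm i y) *
    if torusAdj x y then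
      ⟪(φ x : EuclideanSpace ℝ (Fin N)), (φ y : EuclideanSpace ℝ (Fin N))⟫
    else 0 := by
    unfold halfE
    congr 1
    rw [← Equiv.sum_comp (reflPerm i)]
    refine Finset.sum_congr rfl fun x _ => ?_
    rw [← Equiv.sum_comp (reflPerm i)]
    refine Finset.sum_congr rfl fun y _ => ?_
    simp only [reflPerm_invol]
    have := affPerm_adj (reflSign i) 0 (reflSign_sq i) (reflSign_or i) x y
    rw [← reflPerm] at this
    simp only [this]
  rw [h2]
  unfold halfE hamiltonian
  rw [← mul_add, ← Finset.sum_add_distrib, neg_mul, neg_neg]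
  congr 1
  refine Finset.sum_congr rfl fun x _ => ?_
  rw [← Finset.sum_add_distrib]
  refine Finset.sum_congr rfl fun y _ => ?_
  rw [← add_mul]
  split_ifs with hadj
  · have h1 : ¬ (sideA i x ∧ sideB i y) := fun h => not_adj_AB hL i x y h.1 h.2 hadj
    have h2 : ¬ (sideA i y ∧ sideB i x) :=
      fun h => not_adj_AB hL i y x h.1 h.2 (torusAdj_symm hadj)
    have h3 : ∀ w : TorusPt d L, sideA i w → ¬ sideB i w := by
      intro w; unfold sideA sideB; omega
    have h4 := h3 x
    have h5 := h3 y
    suffices halfW i x y + halfW i (reflPerm i x) (reflPerm i y) = 1 by rw [this, one_mul]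
    unfold halfW
    simp only [sideA_refl, sideB_refl]
    by_cases ax : sideA i x <;> by_cases ay : sideA i y <;> by_cases bx : sideB i x <;>
      by_cases bY : sideB i y <;> simp_all <;> norm_num
  · simp

lemma continuous_halfE (i : Fin d) : Continuous (halfE i : SpinCfg d L N → ℝ) := by
  unfold halfE
  refine continuous_const.mul (continuous_finsetSum _ fun x _ => continuous_finsetSum _ fun y _ =>
    continuous_const.mul ?_)
  split_ifs
  · exact continuous_inner_cfg x y
  · exact continuous_const

lemma halfE_loc (i : Fin d) (φ ψ : SpinCfg d L N) (h : ∀ x, ¬ sideB i x → φ x = ψ x) :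
    halfE i φ = halfE i ψ := by
  unfold halfE
  congr 1
  refine Finset.sum_congr rfl fun x _ => Finset.sum_congr rfl fun y _ => ?_
  by_cases hb : sideB i x ∨ sideB i y
  · simp [halfW, hb]
  · push Not at hb
    rw [h x hb.1, h y hb.2]

lemma gibbs_refl_pos (hL : Even L) (β : ℝ) (i : Fin d) {n : ℕ} (c : Fin n → ℝ)
    (p : Fin n → TorusPt d L) (hp : ∀ j, ¬ sideB i (p j)) :
    0 ≤ ∑ j, ∑ k, c j * c k * corrOne d L N β (p j) (reflPerm i (p k)) := by
  have hZ : 0 ≤ (∫ φ : SpinCfg d L N, Real.exp (-β * hamiltonian φ) ∂(spinMeasure d L N))⁻¹ :=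
    inv_nonneg.2 (integral_nonneg fun φ => (Real.exp_pos _).le)
  let F : SpinCfg d L N → ℝ := fun φ => ∑ j, c j * (φ (p j) : EuclideanSpace ℝ (Fin N)) 0
  have hFc : Continuous F := by
    refine continuous_finsetSum _ fun j _ => continuous_const.mul (continuous_comp_cfg _)
  have hEc := continuous_halfE (N := N) (L := L) i
  have hHc := continuous_hamiltonian (N := N) (L := L) (d := d)
  have hpos := refl_pos (sphereUniform N) (sideA i) (sideB i) (reflPerm (L := L) i)
    (by intro x; unfold sideA sideB; omega) (reflPerm_invol i)
    (fun x hx => (sideB_refl i x).2 hx) (reflPerm_fix i)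
    (fun φ : SpinCfg d L N => F φ * Real.exp (β * halfE i φ)) (by fun_prop)
    (by
      intro φ ψ h
      rw [halfE_loc i φ ψ h]
      congr 1
      refine Finset.sum_congr rfl fun j _ => ?_
      rw [h _ (hp j)])
  have hsum : ∑ j, ∑ k, c j * c k * corrOne d L N β (p j) (reflPerm i (p k)) =
      (∫ φ : SpinCfg d L N, Real.exp (-β * hamiltonian φ) ∂(spinMeasure d L N))⁻¹ *
      ∫ φ : SpinCfg d L N, ∑ j, ∑ k, c j * c k * ((φ (p j) : EuclideanSpace ℝ (Fin N)) 0 *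
        (φ (reflPerm i (p k)) : EuclideanSpace ℝ (Fin N)) 0 * Real.exp (-β * hamiltonian φ))
        ∂(spinMeasure d L N) := by
    have hci : ∀ j k, Continuous fun φ : SpinCfg d L N =>
        c j * c k * ((φ (p j) : EuclideanSpace ℝ (Fin N)) 0 *
        (φ (reflPerm i (p k)) : EuclideanSpace ℝ (Fin N)) 0 * Real.exp (-β * hamiltonian φ)) := by
      intro j k
      have := continuous_comp_cfg (N := N) (p j)
      have := continuous_comp_cfg (N := N) (reflPerm i (p k))
      fun_prop
    rw [integral_finsetSum _ fun j _ => integrable_finsetSum _ fun k _ => integrable_cfg (hci j k)]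
    rw [Finset.mul_sum]
    refine Finset.sum_congr rfl fun j _ => ?_
    rw [integral_finsetSum _ fun k _ => integrable_cfg (hci j k), Finset.mul_sum]
    refine Finset.sum_congr rfl fun k _ => ?_
    rw [integral_const_mul]
    unfold corrOne gibbsExp
    ring
  rw [hsum]
  refine mul_nonneg hZ ?_
  refine hpos.trans_eq (integral_congr_ae (Filter.Eventually.of_forall fun φ => ?_))
  simp only [F]
  have he : -β * hamiltonian φ = β * halfE i φ + β * halfE i (fun x => φ (reflPerm i x)) := by
    rw [← mul_add, halfE_add hL]; ring
  rw [he, Real.exp_add, mul_mul_mul_comm, Finset.sum_mul_sum, Finset.sum_mul]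
  refine Finset.sum_congr rfl fun j _ => ?_
  rw [Finset.sum_mul]
  refine Finset.sum_congr rfl fun k _ => ?_
  ring

/-- Evaluation of reflected correlations: both orientations of the perpendicular displacement. -/
lemma corr_eval (β : ℝ) (i : Fin d) (u v w : TorusPt d L) (hi : w i = u i + v i)
    (hk : (∀ k, k ≠ i → w k = v k - u k) ∨ (∀ k, k ≠ i → w k = u k - v k)) :
    corrOne d L N β u (reflPerm i v) = corrOne d L N β (torusOrigin d L) w := by
  rcases hk with hk | hk
  · rw [← corrOne_auto β _ (affPerm_adj (reflSign i) u (reflSign_sq i) (reflSign_or i))]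
    congr 1
    · funext k; simp [affPerm, torusOrigin]
    · funext k
      simp only [affPerm, Equiv.coe_fn_mk, reflPerm_apply, reflSign]
      by_cases h : k = i
      · subst h; simp [hi, add_comm]
      · simp [h, hk k h]
  · rw [← corrOne_auto β _ (affPerm_adj (fun _ => -1) u (by simp) (by simp))]
    congr 1
    · funext k; simp [affPerm, torusOrigin]
    · funext k
      simp only [affPerm, Equiv.coe_fn_mk, reflPerm_apply]
      by_cases h : k = i
      · subst h; simp [hi, add_comm]
      · simp [h, hk k h]

end model

/-- **Convexity of the averaged two-point function of the spin O(N) model.**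
If `z ≠ o`, `z_i + q` is even and `z_i - q, z_i + q ∈ (0, L)`, then
`Ĝ(z) - Ĝ(z - q e_i) ≤ Ĝ(z + q e_i) - Ĝ(z)`. -/
theorem spin_avg_two_point_convexity
    (d L N : ℕ) [NeZero L] [NeZero N] (hd : 2 ≤ d) (hL : Even L)
    (β : ℝ) (hβ : 0 ≤ β) (z : TorusPt d L) (hz : z ≠ torusOrigin d L) (i : Fin d)
    (q : ℕ) (hpar : Even ((z i).val + q))
    (hlow : q < (z i).val) (hhigh : (z i).val + q < L) :
    avgTwoPoint d L N β i z -
        avgTwoPoint d L N β i (Function.update z i (z i - (q : ZMod L))) ≤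
      avgTwoPoint d L N β i (Function.update z i (z i + (q : ZMod L))) -
        avgTwoPoint d L N β i z := by
  obtain ⟨b, hb⟩ := hpar
  have hzv : (((z i).val : ℕ) : ZMod L) = z i := ZMod.natCast_zmod_val _
  obtain ⟨a, ha⟩ : ∃ a, (z i).val = a + a + q := ⟨b - q, by omega⟩
  have hbq : b = a + q := by omega
  have hzi : z i = (a : ZMod L) + a + q := by rw [← hzv, ha]; push_cast; ring
  let p : Fin 4 → TorusPt d L := ![fun k => if k = i then (a : ZMod L) else 0,
    fun k => if k = i then (a : ZMod L) else z k,
    fun k => if k = i then (b : ZMod L) else 0,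
    fun k => if k = i then (b : ZMod L) else z k]
  have hva : ((a : ℕ) : ZMod L).val = a := ZMod.val_natCast_of_lt (by omega)
  have hvb : ((b : ℕ) : ZMod L).val = b := ZMod.val_natCast_of_lt (by omega)
  have hp : ∀ j, ¬ sideB i (p j) := by
    intro j
    unfold sideB
    fin_cases j <;> simp [p, hva, hvb] <;> omega
  have key := gibbs_refl_pos (N := N) hL β i ![1, 1, -1, -1] p hp
  simp only [Fin.sum_univ_four] at key
  set zm : TorusPt d L := Function.update z i (z i - (q : ZMod L)) with hzm
  set zp : TorusPt d L := Function.update z i (z i + (q : ZMod L)) with hzp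
  let ax : TorusPt d L → TorusPt d L := fun w k => if k = i then w i else 0
  have hmi : zm i = (a : ZMod L) + a := by simp [hzm, hzi]
  have hpi : zp i = (b : ZMod L) + b := by simp [hzp, hzi, hbq]; ring
  have hmk : ∀ k, k ≠ i → zm k = z k := fun k hk => by simp [hzm, hk]
  have hpk : ∀ k, k ≠ i → zp k = z k := fun k hk => by simp [hzp, hk]
  have hzab : z i = (a : ZMod L) + b := by rw [hzi, hbq]; push_cast; ring
  have hzba : z i = (b : ZMod L) + a := by rw [hzi, hbq]; push_cast; ring
  have e00 := corr_eval (N := N) β i (p 0) (p 0) (ax zm) (by simp [p, ax, hmi])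
    (Or.inl (by intro k hk; simp [p, ax, hk]))
  have e01 := corr_eval (N := N) β i (p 0) (p 1) zm (by simp [p, hmi])
    (Or.inl (by intro k hk; simp [p, hk, hmk]))
  have e10 := corr_eval (N := N) β i (p 1) (p 0) zm (by simp [p, hmi])
    (Or.inr (by intro k hk; simp [p, hk, hmk]))
  have e11 := corr_eval (N := N) β i (p 1) (p 1) (ax zm) (by simp [p, ax, hmi])
    (Or.inl (by intro k hk; simp [p, ax, hk]))
  have e22 := corr_eval (N := N) β i (p 2) (p 2) (ax zp) (by simp [p, ax, hpi])
    (Or.inl (by intro k hk; simp [p, ax, hk]))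
  have e23 := corr_eval (N := N) β i (p 2) (p 3) zp (by simp [p, hpi])
    (Or.inl (by intro k hk; simp [p, hk, hpk]))
  have e32 := corr_eval (N := N) β i (p 3) (p 2) zp (by simp [p, hpi])
    (Or.inr (by intro k hk; simp [p, hk, hpk]))
  have e33 := corr_eval (N := N) β i (p 3) (p 3) (ax zp) (by simp [p, ax, hpi])
    (Or.inl (by intro k hk; simp [p, ax, hk]))
  have e02 := corr_eval (N := N) β i (p 0) (p 2) (ax z) (by simp [p, ax, hzab])
    (Or.inl (by intro k hk; simp [p, ax, hk]))
  have e03 := corr_eval (N := N) β i (p 0) (p 3) z (by simp [p, hzab])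
    (Or.inl (by intro k hk; simp [p, hk]))
  have e12 := corr_eval (N := N) β i (p 1) (p 2) z (by simp [p, hzab])
    (Or.inr (by intro k hk; simp [p, hk]))
  have e13 := corr_eval (N := N) β i (p 1) (p 3) (ax z) (by simp [p, ax, hzab])
    (Or.inl (by intro k hk; simp [p, ax, hk]))
  have e20 := corr_eval (N := N) β i (p 2) (p 0) (ax z) (by simp [p, ax, hzba])
    (Or.inl (by intro k hk; simp [p, ax, hk]))
  have e21 := corr_eval (N := N) β i (p 2) (p 1) z (by simp [p, hzba])
    (Or.inl (by intro k hk; simp [p, hk]))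
  have e30 := corr_eval (N := N) β i (p 3) (p 0) z (by simp [p, hzba])
    (Or.inr (by intro k hk; simp [p, hk]))
  have e31 := corr_eval (N := N) β i (p 3) (p 1) (ax z) (by simp [p, ax, hzba])
    (Or.inl (by intro k hk; simp [p, ax, hk]))
  rw [e00, e01, e02, e03, e10, e11, e12, e13, e20, e21, e22, e23, e30, e31, e32, e33] at key
  have c0 : (![1, 1, -1, -1] : Fin 4 → ℝ) 0 = 1 := rfl
  have c1 : (![1, 1, -1, -1] : Fin 4 → ℝ) 1 = 1 := rfl
  have c2 : (![1, 1, -1, -1] : Fin 4 → ℝ) 2 = -1 := rfl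
  have c3 : (![1, 1, -1, -1] : Fin 4 → ℝ) 3 = -1 := rfl
  rw [c0, c1, c2, c3] at key
  change (corrOne d L N β (torusOrigin d L) z + corrOne d L N β (torusOrigin d L) (ax z)) / 2 -
    (corrOne d L N β (torusOrigin d L) zm + corrOne d L N β (torusOrigin d L) (ax zm)) / 2 ≤
    (corrOne d L N β (torusOrigin d L) zp + corrOne d L N β (torusOrigin d L) (ax zp)) / 2 -
    (corrOne d L N β (torusOrigin d L) z + corrOne d L N β (torusOrigin d L) (ax z)) / 2
  linarith
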